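/- For every n ≥ 1, the equivalence relation =_ℕ^{n+} is compact for learning: a countable family K of pairwise nonisomorphic structures in Mod is =_ℕ^{n+}-learnable if and only if for all distinct A, B ∈ K the pair {A, B} is =_ℕ^{n+}-learnable. -/

import Mathlib

/-!  Common definitions.

`Tower n` is the space ℕ^(ℕ^(n+1)) of the paper: `Tower 0 = ℕ → ℕ`,
`Tower (n+1) = ℕ → Tower n`, each with the product topology (ℕ discrete).
-/

def Tower : ℕ → Type
  | 0 => ℕ → ℕ
  | n + 1 => ℕ → Tower n

instance Tower.topologicalSpace : (n : ℕ) → TopologicalSpace (Tower n)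
  | 0 => inferInstanceAs (TopologicalSpace (ℕ → ℕ))
  | n + 1 => letI := Tower.topologicalSpace n
             inferInstanceAs (TopologicalSpace (ℕ → Tower n))

/-- The Friedman–Stanley jump `E⁺` of an equivalence relation `E` on `X`. -/
def FSJump {X : Type*} (E : X → X → Prop) (p q : ℕ → X) : Prop :=
  (∀ k, ∃ l, E (p k) (q l)) ∧ ∀ l, ∃ k, E (q l) (p k)

/-- The power `E^ω` of an equivalence relation `E` on `X`. -/
def RelPow {X : Type*} (E : X → X → Prop) (p q : ℕ → X) : Prop :=
  ∀ k, E (p k) (q k)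

/-- `eqNatPlus n` is the relation `=_ℕ^{(n+1)+}` on `Tower n = ℕ^(ℕ^(n+1))`. -/
def eqNatPlus : (n : ℕ) → Tower n → Tower n → Prop
  | 0 => FSJump (· = · : ℕ → ℕ → Prop)
  | n + 1 => FSJump (eqNatPlus n)

/-- `eqBairePlus n` is the relation `=_{ℕ^ℕ}^{(n+1)+}` on `Tower (n+1) = ℕ^(ℕ^(n+2))`. -/
def eqBairePlus : (n : ℕ) → Tower (n + 1) → Tower (n + 1) → Prop
  | 0 => FSJump (· = · : (ℕ → ℕ) → (ℕ → ℕ) → Prop)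
  | n + 1 => FSJump (eqBairePlus n)

/-- `FullRel m` on `Tower m = ℕ^(ℕ^(m+1))`: for `m = 2n` it is `(=_ℕ^+)^{n(ω+)}`,
for `m = 2n+1` it is `(=_{ℕ^ℕ}^+)^{n(ω+)}` (with `E^{0(ω+)} = E`,
`E^{(n+1)(ω+)} = ((E^{n(ω+)})^ω)^+`). -/
def FullRel : (m : ℕ) → Tower m → Tower m → Prop
  | 0 => FSJump (· = · : ℕ → ℕ → Prop)
  | 1 => FSJump (· = · : (ℕ → ℕ) → (ℕ → ℕ) → Prop)
  | m + 2 => FSJump (RelPow (FullRel m))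

/-- The pair of canonical elements `(F_{m+1}, I_{m+1})` of `Tower m = ℕ^(ℕ^(m+1))`. -/
def can : (m : ℕ) → Tower m × Tower m
  | 0 => (fun k => if k = 0 then 0 else 1, fun _ => 1)
  | 1 => (fun i k => if i = 0 then 0 else if k + 1 < i then 0 else 1,
          fun i k => if k < i then 0 else 1)
  | m + 2 =>
      (fun i k => if i = 0 then (can m).1 else if k + 1 < i then (can m).1 else (can m).2,
       fun i k => if k < i then (can m).1 else (can m).2)

/-- The canonical element `F_{m+1} ∈ ℕ^(ℕ^(m+1))`. -/
def canF (m : ℕ) : Tower m := (can m).1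

/-- The canonical element `I_{m+1} ∈ ℕ^(ℕ^(m+1))`. -/
def canI (m : ℕ) : Tower m := (can m).2

/-- `p ∈ Tower m = ℕ^(ℕ^(m+1))` is `full_{m+1}`. -/
def IsFull (m : ℕ) (p : Tower m) : Prop := FullRel m p (canF m)

/-- `p ∈ Tower m = ℕ^(ℕ^(m+1))` is `initial_{m+1}`. -/
def IsInitial (m : ℕ) (p : Tower m) : Prop := FullRel m p (canI m)

open Classical in
/-- The permission operator `∧₀`. -/
noncomputable def perm0 (p q : ℕ → ℕ) : ℕ → ℕ :=
  fun k => if ∀ j ≤ k, p j = q j then p k else 1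

/-- The permission operator `∧_{m+1}` on `Tower m = ℕ^(ℕ^(m+1))`
(with `⟨·,·⟩ = Nat.pair`). -/
noncomputable def perm : (m : ℕ) → Tower m → Tower m → Tower m
  | 0, p, q => fun x => max (p (Nat.unpair x).1) (q (Nat.unpair x).2)
  | 1, p, q => fun x => perm0 (p (Nat.unpair x).1) (q (Nat.unpair x).2)
  | m + 2, p, q => fun x k => perm m (p (Nat.unpair x).1 k) (q (Nat.unpair x).2 k)

/-- The operator `⊗_{m+1,i}` on `Tower m = ℕ^(ℕ^(m+1))` (with `⟨·,·⟩ = Nat.pair`). -/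
def otimes : (m : ℕ) → ℕ → Tower m → Tower m
  | 0, i, p => fun k => Nat.pair (p k) i
  | m + 1, i, p => fun k => otimes m i (p k)

/-- `E` continuously reduces to `F`. -/
def ContReduces {X Y : Type*} [TopologicalSpace X] [TopologicalSpace Y]
    (E : X → X → Prop) (F : Y → Y → Prop) : Prop :=
  ∃ f : X → Y, Continuous f ∧ ∀ x x', E x x' ↔ F (f x) (f x')

/-- `SigmaLevel X n` is the pointclass `Σ⁰_{n+1}(X)`: `Σ⁰_1` = open sets,
`Σ⁰_{n+1}` = countable unions of complements of `Σ⁰_n` sets. -/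
def SigmaLevel (X : Type*) [TopologicalSpace X] : ℕ → Set (Set X)
  | 0 => {C | IsOpen C}
  | n + 1 => {C | ∃ A : ℕ → Set X, (∀ i, A i ∈ SigmaLevel X n) ∧ C = ⋃ i, (A i)ᶜ}

/-- The space of `(ι, ar)`-structures with domain ℕ. -/
def Md (ι : Type) (ar : ι → ℕ) : Type := ∀ i : ι, (Fin (ar i) → ℕ) → Bool

instance (ι : Type) (ar : ι → ℕ) : TopologicalSpace (Md ι ar) :=
  inferInstanceAs (TopologicalSpace (∀ i : ι, (Fin (ar i) → ℕ) → Bool))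

/-- Isomorphism of structures with domain ℕ. -/
def Iso {ι : Type} {ar : ι → ℕ} (A B : Md ι ar) : Prop :=
  ∃ σ : ℕ → ℕ, Function.Bijective σ ∧ ∀ i v, A i v = B i (σ ∘ v)

/-- The learning domain of a family: the closure of `K` under isomorphism. -/
def LearnDom {ι : Type} {ar : ι → ℕ} (K : Set (Md ι ar)) : Set (Md ι ar) :=
  {S | ∃ A ∈ K, Iso S A}

/-- The family `K` is `E`-learnable. -/
def Learnable {ι : Type} {ar : ι → ℕ} {X : Type*} [TopologicalSpace X]
    (E : X → X → Prop) (K : Set (Md ι ar)) : Prop :=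
  ∃ Γ : LearnDom K → X, Continuous Γ ∧
    ∀ S S' : LearnDom K, (Iso S.1 S'.1 ↔ E (Γ S) (Γ S'))

/-- A countable family of pairwise nonisomorphic structures. -/
def GoodFamily {ι : Type} {ar : ι → ℕ} (K : Set (Md ι ar)) : Prop :=
  K.Countable ∧ ∀ A ∈ K, ∀ B ∈ K, A ≠ B → ¬ Iso A B

/-- `E` is learn-reducible to `F` (w.r.t. structures in `Md ι ar`). -/
def LearnRed (ι : Type) (ar : ι → ℕ) {X Y : Type*} [TopologicalSpace X]
    [TopologicalSpace Y] (E : X → X → Prop) (F : Y → Y → Prop) : Prop :=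
  ∀ K : Set (Md ι ar), GoodFamily K → Learnable E K → Learnable F K

/-- `E` is compact for learning (w.r.t. structures in `Md ι ar`). -/
def CompactForLearning (ι : Type) (ar : ι → ℕ) {X : Type*} [TopologicalSpace X]
    (E : X → X → Prop) : Prop :=
  ∀ K : Set (Md ι ar), GoodFamily K →
    (Learnable E K ↔ ∀ A ∈ K, ∀ B ∈ K, A ≠ B → Learnable E ({A, B} : Set (Md ι ar)))

set_option linter.style.haveILetI false
set_option linter.unusedSimpArgs false

/-! ### Pointclasses -/

section pointclasses
variable {X : Type*} [TopologicalSpace X]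

theorem sl_empty_univ (n : ℕ) :
    (∅ : Set X) ∈ SigmaLevel X n ∧ (Set.univ : Set X) ∈ SigmaLevel X n := by
  induction n with
  | zero => exact ⟨isOpen_empty, isOpen_univ⟩
  | succ n ih =>
    exact ⟨⟨fun _ => Set.univ, fun _ => ih.2, by simp⟩, ⟨fun _ => ∅, fun _ => ih.1, by simp [Set.iUnion_const]⟩⟩

theorem sl_succ {I : Type*} [Countable I] {n : ℕ} {A : I → Set X}
    (hA : ∀ i, A i ∈ SigmaLevel X n) : (⋃ i, (A i)ᶜ) ∈ SigmaLevel X (n + 1) := by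
  rcases isEmpty_or_nonempty I with h | h
  · simpa using (sl_empty_univ (X := X) (n + 1)).1
  · obtain ⟨f, hf⟩ := exists_surjective_nat I
    exact ⟨fun k => A (f k), fun k => hA _, (hf.iUnion_comp (fun i => (A i)ᶜ)).symm⟩

theorem sl_compl {n : ℕ} {A : Set X} (hA : A ∈ SigmaLevel X n) : Aᶜ ∈ SigmaLevel X (n + 1) :=
  ⟨fun _ => A, fun _ => hA, by simp [Set.iUnion_const]⟩

theorem sl_iUnion {I : Type*} [Countable I] {n : ℕ} {A : I → Set X}
    (hA : ∀ i, A i ∈ SigmaLevel X n) : (⋃ i, A i) ∈ SigmaLevel X n := by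
  cases n with
  | zero => exact isOpen_iUnion hA
  | succ n =>
    choose B hB hAB using hA
    have : (⋃ i, A i) = ⋃ p : I × ℕ, (B p.1 p.2)ᶜ := by
      rw [Set.iUnion_prod']
      exact Set.iUnion_congr hAB
    rw [this]
    exact sl_succ fun p => hB _ _

theorem sl_union {n : ℕ} {A B : Set X} (hA : A ∈ SigmaLevel X n) (hB : B ∈ SigmaLevel X n) :
    A ∪ B ∈ SigmaLevel X n := by
  rw [Set.union_eq_iUnion]
  exact sl_iUnion (by rintro (_ | _) <;> assumption)

theorem sl_inter {n : ℕ} {A B : Set X} (hA : A ∈ SigmaLevel X n) (hB : B ∈ SigmaLevel X n) :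
    A ∩ B ∈ SigmaLevel X n := by
  cases n with
  | zero => exact IsOpen.inter hA hB
  | succ n =>
    obtain ⟨C, hC, rfl⟩ := hA
    obtain ⟨D, hD, rfl⟩ := hB
    have : (⋃ i, (C i)ᶜ) ∩ (⋃ i, (D i)ᶜ) = ⋃ p : ℕ × ℕ, (C p.1 ∪ D p.2)ᶜ := by
      ext x; simp
    rw [this]
    exact sl_succ fun p => sl_union (hC _) (hD _)

theorem sl_biInter_lt {n : ℕ} {A : ℕ → Set X} (hA : ∀ i, A i ∈ SigmaLevel X n) (j : ℕ) :
    {x | ∀ i ≤ j, x ∈ A i} ∈ SigmaLevel X n := by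
  induction j with
  | zero => simpa using hA 0
  | succ j ih =>
    convert sl_inter ih (hA (j + 1)) using 1
    ext x
    simp only [Set.mem_ofPred_eq, Set.mem_inter_iff]
    constructor
    · exact fun h => ⟨fun i hi => h i (by omega), h _ le_rfl⟩
    · rintro ⟨h1, h2⟩ i hi
      rcases Nat.lt_or_ge j i with h | h
      · obtain rfl : i = j + 1 := by omega
        exact h2
      · exact h1 i h

theorem sl_preimage {Y : Type*} [TopologicalSpace Y] {f : Y → X} (hf : Continuous f) {n : ℕ}
    {A : Set X} (hA : A ∈ SigmaLevel X n) : f ⁻¹' A ∈ SigmaLevel Y n := by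
  induction n generalizing A with
  | zero => exact IsOpen.preimage hf hA
  | succ n ih =>
    obtain ⟨C, hC, rfl⟩ := hA
    rw [Set.preimage_iUnion]
    exact ⟨fun i => f ⁻¹' C i, fun i => ih (hC i), rfl⟩

theorem sl_extend (D : Set X) {n : ℕ} {A : Set D} (hA : A ∈ SigmaLevel D n) :
    ∃ B ∈ SigmaLevel X n, A = Subtype.val ⁻¹' B := by
  induction n generalizing A with
  | zero =>
    obtain ⟨B, hB, h⟩ := isOpen_induced_iff.1 hA
    exact ⟨B, hB, h.symm⟩
  | succ n ih =>
    obtain ⟨C, hC, rfl⟩ := hA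
    choose B hB h using fun i => ih (hC i)
    refine ⟨_, sl_succ hB, ?_⟩
    rw [Set.preimage_iUnion]
    exact Set.iUnion_congr fun i => by rw [h i]; rfl

theorem sl_borel {n : ℕ} {A : Set X} (hA : A ∈ SigmaLevel X n) : @MeasurableSet X (borel X) A := by
  letI := borel X
  haveI : BorelSpace X := ⟨rfl⟩
  induction n generalizing A with
  | zero => exact IsOpen.measurableSet hA
  | succ n ih =>
    obtain ⟨C, hC, rfl⟩ := hA
    exact MeasurableSet.iUnion fun i => (ih (hC i)).compl

end pointclasses

/-! ### Vaught transforms -/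

def GG : Set ((ℕ → ℕ) × (ℕ → ℕ)) :=
  {p | (∀ x, p.1 (p.2 x) = x) ∧ ∀ x, p.2 (p.1 x) = x}

theorem GG_closed : IsClosed GG := by
  have h1 : Continuous fun q : ℕ × (ℕ → ℕ) => q.2 q.1 := by
    refine continuous_prod_of_discrete_left.2 fun a => ?_
    exact continuous_apply a
  unfold GG
  simp only [Set.ofPred_and, Set.ofPred_forall]
  refine (isClosed_iInter fun x => ?_).inter (isClosed_iInter fun x => ?_)
  · refine isClosed_eq ?_ continuous_const
    exact h1.comp (f := fun p : (ℕ → ℕ) × (ℕ → ℕ) => (p.2 x, p.1)) (((continuous_apply x).comp continuous_snd).prodMk continuous_fst)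
  · refine isClosed_eq ?_ continuous_const
    exact h1.comp (f := fun p : (ℕ → ℕ) × (ℕ → ℕ) => (p.1 x, p.2)) (((continuous_apply x).comp continuous_fst).prodMk continuous_snd)

instance GG_polish : PolishSpace GG := GG_closed.polishSpace
instance GG_baire : BaireSpace GG := by
  letI := TopologicalSpace.upgradeIsCompletelyMetrizable GG
  infer_instance

section vaught
variable {ι : Type} {ar : ι → ℕ}

def pb (f : ℕ → ℕ) (S : Md ι ar) : Md ι ar := fun i v => S i (f ∘ v)

theorem pb_cont_left (f : ℕ → ℕ) : Continuous (pb f : Md ι ar → Md ι ar) := by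
  refine continuous_pi fun i => continuous_pi fun v => ?_
  exact (continuous_apply (f ∘ v)).comp (continuous_apply (A := fun i : ι => (Fin (ar i) → ℕ) → Bool) i)

theorem pb_cont_right (S : Md ι ar) : Continuous (fun f : ℕ → ℕ => pb f S) := by
  refine continuous_pi fun i => continuous_pi fun v => ?_
  have : Continuous fun f : ℕ → ℕ => f ∘ v :=
    continuous_pi fun j => continuous_apply (v j)
  exact (continuous_of_discreteTopology (f := S i)).comp this

def act (g : GG) (S : Md ι ar) : Md ι ar := pb g.1.1 S

theorem act_cont_right (S : Md ι ar) : Continuous (fun g : GG => act g S) :=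
  (pb_cont_right S).comp (continuous_fst.comp continuous_subtype_val)

/-- The Vaught transform. -/
def vt (V : Set (Md ι ar)) (O : Set GG) : Set (Md ι ar) :=
  {S | ¬ IsMeagre (O ∩ (fun g => act g S) ⁻¹' V)}

theorem vt_sl {n : ℕ} {V : Set (Md ι ar)} (hV : V ∈ SigmaLevel (Md ι ar) n)
    {O : Set GG} (hO : IsOpen O) : vt V O ∈ SigmaLevel (Md ι ar) n := by
  induction n generalizing V O with
  | zero =>
    have : vt V O = ⋃ g ∈ O, (act g) ⁻¹' V := by
      ext S
      simp only [vt, Set.mem_ofPred_eq, Set.mem_iUnion, Set.mem_preimage, exists_prop]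
      constructor
      · intro h
        obtain ⟨g, h1, h2⟩ := nonempty_of_not_isMeagre h
        exact ⟨g, h1, h2⟩
      · rintro ⟨g, h1, h2⟩
        exact not_isMeagre_of_isOpen (hO.inter (IsOpen.preimage (act_cont_right S) hV)) ⟨g, h1, h2⟩
    rw [this]
    exact isOpen_biUnion fun g _ => IsOpen.preimage (pb_cont_left _) hV
  | succ n ih =>
    obtain ⟨C, hC, rfl⟩ := hV
    let J := {b : Set GG // b ∈ TopologicalSpace.countableBasis GG ∧ b ⊆ O}
    haveI : Countable J := by
      have : (TopologicalSpace.countableBasis GG ∩ {b | b ⊆ O}).Countable :=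
        (TopologicalSpace.countable_countableBasis GG).mono Set.inter_subset_left
      exact this.to_subtype
    have key : vt (⋃ i, (C i)ᶜ) O = ⋃ p : ℕ × J, (vt (C p.1) p.2.1)ᶜ := by
      ext S
      simp only [vt, Set.mem_iUnion, Set.mem_compl_iff, Set.mem_ofPred_eq, not_not]
      constructor
      · intro h
        rw [Set.preimage_iUnion, Set.inter_iUnion] at h
        have : ∃ i, ¬ IsMeagre (O ∩ (fun g => act g S) ⁻¹' (C i)ᶜ) := by
          by_contra! h'
          exact h (isMeagre_iUnion h')
        obtain ⟨i, hi⟩ := this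
        have hmeas : BaireMeasurableSet (O ∩ (fun g => act g S) ⁻¹' (C i)ᶜ) := by
          refine hO.baireMeasurableSet.inter ?_
          letI := borel (Md ι ar)
          haveI : BorelSpace (Md ι ar) := ⟨rfl⟩
          letI := borel GG
          haveI : BorelSpace GG := ⟨rfl⟩
          have h1 : MeasurableSet (C i)ᶜ := (sl_borel (hC i)).compl
          exact ((act_cont_right S).measurable h1).baireMeasurableSet
        obtain ⟨u, hu, hue⟩ := hmeas.residualEq_isOpen
        have hdiff : ∀ s t : Set GG, s =ᶠ[residual GG] t → IsMeagre (s \ t) := by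
          intro s t h
          unfold IsMeagre
          filter_upwards [h] with x hx
          have hx' : (x ∈ s) = (x ∈ t) := hx
          simp only [Set.mem_compl_iff, Set.mem_sdiff, hx']
          tauto
        have hne : (u ∩ O).Nonempty := by
          by_contra h0
          rw [Set.not_nonempty_iff_eq_empty] at h0
          refine hi ((hdiff _ _ hue).mono ?_)
          intro x hx
          refine ⟨hx, fun hxu => ?_⟩
          have : x ∈ u ∩ O := ⟨hxu, hx.1⟩
          rw [h0] at this
          exact this
        obtain ⟨x, hxu⟩ := hne
        obtain ⟨b, hb, hxb, hbu⟩ := (TopologicalSpace.isBasis_countableBasis GG).exists_subset_of_mem_open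
          hxu (hu.inter hO)
        refine ⟨(i, ⟨b, hb, fun y hy => (hbu hy).2⟩), (hdiff _ _ hue.symm).mono ?_⟩
        rintro y ⟨hy1, hy2⟩
        exact ⟨(hbu hy1).1, fun hy3 => hy3.2 hy2⟩
      · rintro ⟨⟨i, b, hb, hbO⟩, hm⟩ h
        refine not_isMeagre_of_isOpen (TopologicalSpace.isOpen_of_mem_countableBasis hb)
          (TopologicalSpace.nonempty_of_mem_countableBasis hb) ((hm.union h).mono ?_)
        intro x hx
        by_cases hxi : act x S ∈ C i
        · exact Or.inl ⟨hx, hxi⟩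
        · exact Or.inr ⟨hbO hx, Set.mem_iUnion.2 ⟨i, hxi⟩⟩
    rw [key]
    exact sl_succ fun p => ih (hC _) (TopologicalSpace.isOpen_of_mem_countableBasis p.2.2.1)

theorem act_iso (g : GG) (S : Md ι ar) : Iso (act g S) S :=
  ⟨g.1.1, ⟨Function.LeftInverse.injective g.2.2, Function.RightInverse.surjective g.2.1⟩,
    fun _ _ => rfl⟩

theorem iso_act {A B : Md ι ar} (h : Iso A B) : ∃ g : GG, A = act g B := by
  obtain ⟨f, hf, h⟩ := h
  let e := Equiv.ofBijective f hf
  exact ⟨⟨(e, e.symm), fun x => e.apply_symm_apply x, fun x => e.symm_apply_apply x⟩,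
    funext fun i => funext fun v => h i v⟩

theorem iso_refl (A : Md ι ar) : Iso A A := ⟨id, Function.bijective_id, fun _ _ => rfl⟩

theorem iso_symm {A B : Md ι ar} (h : Iso A B) : Iso B A := by
  obtain ⟨g, rfl⟩ := iso_act h
  refine ⟨g.1.2, ⟨Function.LeftInverse.injective g.2.1, Function.RightInverse.surjective g.2.2⟩,
    fun i v => ?_⟩
  show B i v = B i (g.1.1 ∘ (g.1.2 ∘ v))
  congr 1
  funext x
  exact (g.2.1 _).symm

theorem iso_trans {A B C : Md ι ar} (h : Iso A B) (h' : Iso B C) : Iso A C := by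
  obtain ⟨f, hf, h⟩ := h
  obtain ⟨g, hg, h'⟩ := h'
  exact ⟨g ∘ f, hg.comp hf, fun i v => by rw [h, h']; rfl⟩

def gmul (g h : GG) : GG :=
  ⟨(g.1.1 ∘ h.1.1, h.1.2 ∘ g.1.2), fun x => by simp [h.2.1, g.2.1], fun x => by simp [h.2.2, g.2.2]⟩

def ginv (g : GG) : GG := ⟨(g.1.2, g.1.1), g.2.2, g.2.1⟩

theorem gmul_cont (g : GG) : Continuous (gmul g) := by
  refine Continuous.subtype_mk (Continuous.prodMk ?_ ?_) _
  · refine continuous_pi fun x => ?_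
    exact (continuous_of_discreteTopology (f := g.1.1)).comp
      ((continuous_apply x).comp (continuous_fst.comp continuous_subtype_val))
  · refine continuous_pi fun x => ?_
    exact (continuous_apply (g.1.2 x)).comp (continuous_snd.comp continuous_subtype_val)

def gmulHomeo (g : GG) : GG ≃ₜ GG where
  toFun := gmul g
  invFun := gmul (ginv g)
  left_inv h := by
    apply Subtype.ext
    refine Prod.ext ?_ ?_ <;> funext x <;> simp [gmul, ginv, g.2.1, g.2.2]
  right_inv h := by
    apply Subtype.ext
    refine Prod.ext ?_ ?_ <;> funext x <;> simp [gmul, ginv, g.2.1, g.2.2]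
  continuous_toFun := gmul_cont g
  continuous_invFun := gmul_cont _

theorem vt_inv_aux {V : Set (Md ι ar)} {A B : Md ι ar} (h : Iso A B) (hA : A ∈ vt V Set.univ) :
    B ∈ vt V Set.univ := by
  obtain ⟨g, rfl⟩ := iso_act h
  intro hB
  apply hA
  have := hB.preimage_of_isOpenMap (gmul_cont g) (gmulHomeo g).isOpenMap
  exact this

theorem vt_inv {V : Set (Md ι ar)} {A B : Md ι ar} (h : Iso A B) :
    A ∈ vt V Set.univ ↔ B ∈ vt V Set.univ :=
  ⟨vt_inv_aux h, vt_inv_aux (iso_symm h)⟩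

theorem vt_mem {V : Set (Md ι ar)} {A : Md ι ar} (h : ∀ S, Iso S A → S ∈ V) :
    A ∈ vt V Set.univ := by
  refine fun hm => not_isMeagre_of_isOpen (X := GG) isOpen_univ
    ⟨⟨(id, id), fun _ => rfl, fun _ => rfl⟩, trivial⟩ (hm.mono ?_)
  exact fun g _ => ⟨trivial, h _ (act_iso g A)⟩

theorem vt_not_mem {V : Set (Md ι ar)} {A : Md ι ar} (h : ∀ S, Iso S A → S ∉ V) :
    A ∉ vt V Set.univ := by
  intro hm
  obtain ⟨g, -, hg⟩ := nonempty_of_not_isMeagre hm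
  exact h _ (act_iso g A) hg

end vaught

/-! ### The relations on towers -/

section fsj
variable {X : Type*} {E : X → X → Prop}

theorem fsj_refl (h : ∀ x, E x x) (p : ℕ → X) : FSJump E p p :=
  ⟨fun k => ⟨k, h _⟩, fun k => ⟨k, h _⟩⟩

theorem fsj_symm {p q : ℕ → X} (h : FSJump E p q) : FSJump E q p := ⟨h.2, h.1⟩

theorem fsj_trans (ht : ∀ x y z, E x y → E y z → E x z) {p q r : ℕ → X}
    (h : FSJump E p q) (h' : FSJump E q r) : FSJump E p r := by
  constructor
  · intro k
    obtain ⟨l, hl⟩ := h.1 k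
    obtain ⟨m, hm⟩ := h'.1 l
    exact ⟨m, ht _ _ _ hl hm⟩
  · intro k
    obtain ⟨l, hl⟩ := h'.2 k
    obtain ⟨m, hm⟩ := h.2 l
    exact ⟨m, ht _ _ _ hl hm⟩

theorem fsj_tag {Y : Type*} {E' : Y → Y → Prop} {T : ℕ → X → Y}
    (hT : ∀ i j x y, E' (T i x) (T j y) ↔ i = j ∧ E x y) (i j : ℕ) (p q : ℕ → X) :
    FSJump E' (fun k => T i (p k)) (fun k => T j (q k)) ↔ i = j ∧ FSJump E p q := by
  simp only [FSJump, hT]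
  constructor
  · rintro ⟨h1, h2⟩
    obtain ⟨-, h, -⟩ := h1 0
    exact ⟨h, fun k => (h1 k).imp fun _ h => h.2, fun k => (h2 k).imp fun _ h => h.2⟩
  · rintro ⟨rfl, h1, h2⟩
    exact ⟨fun k => (h1 k).imp fun _ h => ⟨rfl, h⟩, fun k => (h2 k).imp fun _ h => ⟨rfl, h⟩⟩

theorem fsj_merge {Y : Type*} {E' : Y → Y → Prop} {T : ℕ → X → Y}
    (hT : ∀ i j x y, E' (T i x) (T j y) ↔ i = j ∧ E x y) (p q : ℕ → ℕ → X) :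
    FSJump E' (fun x => T x.unpair.1 (p x.unpair.1 x.unpair.2))
      (fun x => T x.unpair.1 (q x.unpair.1 x.unpair.2)) ↔ ∀ i, FSJump E (p i) (q i) := by
  simp only [FSJump, hT]
  constructor
  · rintro ⟨h1, h2⟩ i
    constructor
    · intro k
      obtain ⟨l, hl1, hl2⟩ := h1 (Nat.pair i k)
      simp only [Nat.unpair_pair] at hl1 hl2
      rw [← hl1] at hl2
      exact ⟨_, hl2⟩
    · intro k
      obtain ⟨l, hl1, hl2⟩ := h2 (Nat.pair i k)
      simp only [Nat.unpair_pair] at hl1 hl2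
      rw [← hl1] at hl2
      exact ⟨_, hl2⟩
  · intro h
    constructor
    · intro x
      obtain ⟨l, hl⟩ := (h x.unpair.1).1 x.unpair.2
      exact ⟨Nat.pair x.unpair.1 l, by simpa using hl⟩
    · intro x
      obtain ⟨l, hl⟩ := (h x.unpair.1).2 x.unpair.2
      exact ⟨Nat.pair x.unpair.1 l, by simpa using hl⟩

end fsj

theorem en_refl : ∀ (n : ℕ) (p : Tower n), eqNatPlus n p p
  | 0, p => fsj_refl (fun _ => rfl) p
  | n + 1, p => fsj_refl (en_refl n) p

theorem en_symm : ∀ (n : ℕ) {p q : Tower n}, eqNatPlus n p q → eqNatPlus n q p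
  | 0, _, _, h => fsj_symm h
  | _ + 1, _, _, h => fsj_symm h

theorem en_trans : ∀ (n : ℕ) {p q r : Tower n}, eqNatPlus n p q → eqNatPlus n q r → eqNatPlus n p r
  | 0, _, _, _, h, h' => fsj_trans (E := (· = ·)) (fun _ _ _ h1 h2 => Eq.trans h1 h2) h h'
  | n + 1, _, _, _, h, h' => fsj_trans (E := eqNatPlus n) (fun _ _ _ h1 h2 => en_trans n h1 h2) h h'

theorem en_otimes : ∀ (n i j : ℕ) (p q : Tower n),
    eqNatPlus n (otimes n i p) (otimes n j q) ↔ i = j ∧ eqNatPlus n p q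
  | 0, i, j, p, q => fsj_tag (T := fun i x => Nat.pair x i)
      (fun i j x y => by rw [Nat.pair_eq_pair]; tauto) i j p q
  | n + 1, i, j, p, q => fsj_tag (en_otimes n) i j p q

/-- Merge a sequence of elements of a tower into one. -/
def mergeT : (n : ℕ) → (ℕ → Tower n) → Tower n
  | 0, p => fun x => Nat.pair (p x.unpair.1 x.unpair.2) x.unpair.1
  | n + 1, p => fun x => otimes n x.unpair.1 (p x.unpair.1 x.unpair.2)

theorem en_merge : ∀ (n : ℕ) (p q : ℕ → Tower n),
    eqNatPlus n (mergeT n p) (mergeT n q) ↔ ∀ i, eqNatPlus n (p i) (q i)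
  | 0, p, q => fsj_merge (T := fun i x => Nat.pair x i)
      (fun i j x y => by rw [Nat.pair_eq_pair]; tauto) p q
  | n + 1, p, q => fsj_merge (en_otimes n) p q

section cont
variable {Z : Type*} [TopologicalSpace Z]

theorem cont_zero {f : Z → Tower 0} : Continuous f ↔ ∀ k, Continuous fun z => (f z : ℕ → ℕ) k :=
  continuous_pi_iff (A := fun _ : ℕ => ℕ)

theorem cont_succ {n : ℕ} {f : Z → Tower (n + 1)} :
    Continuous f ↔ ∀ k, Continuous fun z => (f z : ℕ → Tower n) k :=
  continuous_pi_iff (A := fun _ : ℕ => Tower n)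

theorem cont_otimes : ∀ (n i : ℕ) {f : Z → Tower n}, Continuous f →
    Continuous fun z => otimes n i (f z)
  | 0, i, f, hf => cont_zero.2 fun k =>
      (continuous_of_discreteTopology (f := fun x => Nat.pair x i)).comp (cont_zero.1 hf k)
  | n + 1, i, f, hf => cont_succ.2 fun k => cont_otimes n i (cont_succ.1 hf k)

theorem cont_merge : ∀ (n : ℕ) {f : Z → ℕ → Tower n}, (∀ k, Continuous fun z => f z k) →
    Continuous fun z => mergeT n (f z)
  | 0, f, hf => cont_zero.2 fun k =>
      (continuous_of_discreteTopology (f := fun x => Nat.pair x k.unpair.1)).comp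
        (cont_zero.1 (hf k.unpair.1) k.unpair.2)
  | n + 1, f, hf => cont_succ.2 fun k =>
      cont_otimes n k.unpair.1 (cont_succ.1 (hf k.unpair.1) k.unpair.2)

end cont

/-! ### Upper bound on complexity -/

theorem en_class : ∀ (n : ℕ) (y : Tower n),
    {x | eqNatPlus n x y}ᶜ ∈ SigmaLevel (Tower n) (2 * n + 1)
  | 0, y => by
    have e : {x : Tower 0 | eqNatPlus 0 x y}ᶜ =
        (⋃ k : ℕ, {x : Tower 0 | ∃ l : ℕ, (x : ℕ → ℕ) k = (y : ℕ → ℕ) l}ᶜ) ∪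
        (⋃ l : ℕ, {x : Tower 0 | ∃ k : ℕ, (y : ℕ → ℕ) l = (x : ℕ → ℕ) k}ᶜ) := by
      ext x
      simp only [eqNatPlus, FSJump, Set.mem_compl_iff, Set.mem_ofPred_eq, Set.mem_union,
        Set.mem_iUnion]
      rw [not_and_or, not_forall, not_forall]
    rw [e]
    refine sl_union (sl_succ fun k => ?_) (sl_succ fun l => ?_)
    · exact (isOpen_discrete {m : ℕ | ∃ l, m = (y : ℕ → ℕ) l}).preimage (cont_zero.1 continuous_id k)
    · have : {x : Tower 0 | ∃ k : ℕ, (y : ℕ → ℕ) l = (x : ℕ → ℕ) k} =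
          ⋃ k : ℕ, (fun x : Tower 0 => (x : ℕ → ℕ) k) ⁻¹' {m : ℕ | (y : ℕ → ℕ) l = m} := by
        ext x; simp [eq_comm]
      rw [this]
      exact isOpen_iUnion fun k => (isOpen_discrete _).preimage (cont_zero.1 continuous_id k)
  | n + 1, y => by
    have e : {x : Tower (n + 1) | eqNatPlus (n + 1) x y}ᶜ =
        (⋃ k : ℕ, (⋃ l : ℕ, ((fun x : Tower (n + 1) => (x : ℕ → Tower n) k) ⁻¹'
          {z | eqNatPlus n z ((y : ℕ → Tower n) l)}ᶜ)ᶜ)ᶜ) ∪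
        (⋃ l : ℕ, (⋃ k : ℕ, ((fun x : Tower (n + 1) => (x : ℕ → Tower n) k) ⁻¹'
          {z | eqNatPlus n z ((y : ℕ → Tower n) l)}ᶜ)ᶜ)ᶜ) := by
      ext x
      simp only [eqNatPlus, FSJump, Set.mem_compl_iff, Set.mem_ofPred_eq, Set.mem_union,
        Set.mem_iUnion, Set.mem_preimage, not_not]
      rw [not_and_or, not_forall, not_forall]
      have : ∀ a b : Tower n, eqNatPlus n a b ↔ eqNatPlus n b a :=
        fun a b => ⟨en_symm n, en_symm n⟩
      refine or_congr Iff.rfl (exists_congr fun l => not_congr (exists_congr fun k => this _ _))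
    rw [e]
    have h : ∀ k l, (fun x : Tower (n + 1) => (x : ℕ → Tower n) k) ⁻¹'
          {z | eqNatPlus n z ((y : ℕ → Tower n) l)}ᶜ ∈ SigmaLevel (Tower (n + 1)) (2 * n + 1) :=
      fun k l => sl_preimage (cont_succ.1 continuous_id k) (en_class n _)
    exact sl_union (sl_succ fun k => sl_succ fun l => h k l) (sl_succ fun l => sl_succ fun k => h k l)

theorem en_sep_aux : ∀ (n : ℕ) (p q : Tower n),
    ¬ eqNatPlus n p q → ∃ W ∈ SigmaLevel (Tower n) (2 * n),
      (∀ x y, eqNatPlus n x y → x ∈ W → y ∈ W) ∧ ¬ (p ∈ W ↔ q ∈ W)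
  | 0, p, q, h => by
    have h' : ∃ c : ℕ, ¬ ((∃ k : ℕ, (p : ℕ → ℕ) k = c) ↔ ∃ k : ℕ, (q : ℕ → ℕ) k = c) := by
      by_contra! h'
      refine h ⟨fun k => ?_, fun k => ?_⟩
      · obtain ⟨l, hl⟩ := (h' _).1 ⟨k, rfl⟩
        exact ⟨l, hl.symm⟩
      · obtain ⟨l, hl⟩ := (h' _).2 ⟨k, rfl⟩
        exact ⟨l, hl.symm⟩
    obtain ⟨c, hc⟩ := h'
    refine ⟨{x | ∃ k : ℕ, (x : ℕ → ℕ) k = c}, ?_, ?_, hc⟩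
    · have : {x : Tower 0 | ∃ k : ℕ, (x : ℕ → ℕ) k = c} =
          ⋃ k : ℕ, (fun x : Tower 0 => (x : ℕ → ℕ) k) ⁻¹' {c} := by
        ext x; simp
      rw [this]
      exact isOpen_iUnion fun k => (isOpen_discrete _).preimage (cont_zero.1 continuous_id k)
    · rintro x y hxy ⟨k, hk⟩
      obtain ⟨l, hl⟩ := hxy.1 k
      exact ⟨l, hl.symm.trans hk⟩
  | n + 1, p, q, h => by
    have h' : ∃ c : Tower n, ¬ ((∃ k : ℕ, eqNatPlus n ((p : ℕ → Tower n) k) c) ↔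
        ∃ k : ℕ, eqNatPlus n ((q : ℕ → Tower n) k) c) := by
      by_contra! h'
      refine h ⟨fun k => ?_, fun k => ?_⟩
      · obtain ⟨l, hl⟩ := (h' _).1 ⟨k, en_refl n _⟩
        exact ⟨l, en_symm n hl⟩
      · obtain ⟨l, hl⟩ := (h' _).2 ⟨k, en_refl n _⟩
        exact ⟨l, en_symm n hl⟩
    obtain ⟨c, hc⟩ := h'
    refine ⟨{x | ∃ k : ℕ, eqNatPlus n ((x : ℕ → Tower n) k) c}, ?_, ?_, hc⟩
    · have : {x : Tower (n + 1) | ∃ k : ℕ, eqNatPlus n ((x : ℕ → Tower n) k) c} =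
          ⋃ k : ℕ, ((fun x : Tower (n + 1) => (x : ℕ → Tower n) k) ⁻¹' {z | eqNatPlus n z c}ᶜ)ᶜ := by
        ext x; simp
      rw [this]
      exact sl_succ (n := 2 * n + 1)
        fun k => sl_preimage (cont_succ.1 continuous_id k) (en_class n _)
    · rintro x y hxy ⟨k, hk⟩
      obtain ⟨l, hl⟩ := hxy.1 k
      exact ⟨l, en_trans n (en_symm n hl) hk⟩

/-! ### Coding -/

/-- Pair of non-equivalent canonical elements. -/
def codeFI : (n : ℕ) → Tower n × Tower n
  | 0 => (fun k => if k = 0 then 0 else 1, fun _ => 0)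
  | n + 1 =>
    (fun k => if k = 0 then mergeT n (fun _ => (codeFI n).1)
      else mergeT n (fun j => if j < k - 1 then (codeFI n).1 else (codeFI n).2),
     fun k => mergeT n (fun j => if j < k then (codeFI n).1 else (codeFI n).2))

theorem codeFI_ne : ∀ n, ¬ eqNatPlus n (codeFI n).1 (codeFI n).2
  | 0 => by
    intro h
    obtain ⟨l, hl⟩ := h.1 1
    simp [codeFI] at hl
  | n + 1 => by
    intro h
    obtain ⟨l, hl⟩ := h.1 0
    simp only [codeFI, if_true] at hl
    rw [en_merge] at hl
    have := hl l
    simp only [lt_irrefl, if_false] at this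
    exact codeFI_ne n this

theorem code_exists {X : Type*} [TopologicalSpace X]
    (hX : ∀ U : Set X, IsOpen U → ∃ C : ℕ → Set X, (∀ k, IsClopen (C k)) ∧ U = ⋃ k, C k) :
    ∀ (n : ℕ) (U : Set X), U ∈ SigmaLevel X (2 * n) →
      ∃ g : X → Tower n, Continuous g ∧ (∀ x ∈ U, eqNatPlus n (g x) (codeFI n).1) ∧
        ∀ x ∉ U, eqNatPlus n (g x) (codeFI n).2
  | 0, U, hU => by
    classical
    obtain ⟨C, hC, rfl⟩ := hX U hU
    refine ⟨fun x k => if k = 0 then 0 else if x ∈ C (k - 1) then 1 else 0, ?_, ?_, ?_⟩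
    · refine cont_zero.2 fun k => ?_
      by_cases hk : k = 0
      · simp only [hk, if_true]
        exact continuous_const
      · simp only [hk, if_false]
        refine continuous_if (fun a ha => ?_) continuous_const.continuousOn continuous_const.continuousOn
        have : frontier (C (k - 1)) = ∅ := (hC _).frontier_eq
        have ha' : a ∈ frontier (C (k - 1)) := ha
        rw [this] at ha'
        exact ha'.elim
    · intro x hx
      obtain ⟨m, hm⟩ := Set.mem_iUnion.1 hx
      constructor
      · intro k
        by_cases h : k ≠ 0 ∧ x ∈ C (k - 1)
        · exact ⟨1, by simp [codeFI, h]⟩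
        · refine ⟨0, ?_⟩
          by_cases hk : k = 0
          · simp [codeFI, hk]
          · have : x ∉ C (k - 1) := fun h' => h ⟨hk, h'⟩
            simp [codeFI, this]
      · intro k
        by_cases hk : k = 0
        · exact ⟨0, by simp [codeFI, hk]⟩
        · exact ⟨m + 1, by simp [codeFI, hk, hm]⟩
    · intro x hx
      have hx' : ∀ k, x ∉ C k := fun k h => hx (Set.mem_iUnion.2 ⟨k, h⟩)
      exact ⟨fun k => ⟨0, by simp [codeFI, hx']⟩, fun k => ⟨0, by simp [codeFI]⟩⟩
  | n + 1, U, hU => by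
    obtain ⟨A, hA, rfl⟩ := hU
    choose B hB hAB using hA
    choose g hg hgF hgI using fun k j => code_exists hX n _ (sl_biInter_lt (hB k) j)
    let pat : ℕ → Tower n := fun k =>
      mergeT n (fun j => if j < k then (codeFI n).1 else (codeFI n).2)
    let full : Tower n := mergeT n (fun _ => (codeFI n).1)
    let gg : X → ℕ → Tower n := fun x k => mergeT n (fun j => g k j x)
    have hgg1 : ∀ x k, x ∉ A k → eqNatPlus n (gg x k) full := by
      intro x k hx
      refine (en_merge n _ _).2 fun j => hgF k j x fun i _ => ?_
      by_contra hxi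
      rw [hAB] at hx
      exact hx (Set.mem_iUnion.2 ⟨i, hxi⟩)
    have hgg2 : ∀ x k, x ∈ A k → ∃ l, eqNatPlus n (gg x k) (pat l) := by
      intro x k hx
      rw [hAB] at hx
      have hx := Set.mem_iUnion.1 hx
      classical
      refine ⟨Nat.find hx, (en_merge n _ _).2 fun j => ?_⟩
      by_cases hj : j < Nat.find hx
      · simp only [hj, if_true]
        refine hgF k j x fun i hi => ?_
        have := Nat.find_min hx (lt_of_le_of_lt hi hj)
        simpa using this
      · simp only [hj, if_false]
        refine hgI k j x fun hi => ?_
        exact Nat.find_spec hx (hi _ (not_lt.1 hj))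
    refine ⟨fun x m => if m.unpair.1 = 0 then pat m.unpair.2 else gg x m.unpair.2, ?_, ?_, ?_⟩
    · refine cont_succ.2 fun m => ?_
      by_cases hm : m.unpair.1 = 0
      · simp only [hm, if_true]
        exact continuous_const
      · simp only [hm, if_false]
        exact cont_merge n fun j => hg _ j
    · intro x hx
      obtain ⟨k, hk⟩ := Set.mem_iUnion.1 hx
      have key : ∀ m : ℕ, (∃ l, eqNatPlus n (gg x m) (pat l)) ∨ eqNatPlus n (gg x m) full :=
        fun m => by
          by_cases h : x ∈ A m
          · exact Or.inl (hgg2 x m h)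
          · exact Or.inr (hgg1 x m h)
      constructor
      · intro m
        by_cases hm : m.unpair.1 = 0
        · refine ⟨m.unpair.2 + 1, ?_⟩
          simp only [hm, if_true]
          exact en_refl n _
        · simp only [hm, if_false]
          rcases key m.unpair.2 with ⟨l, hl⟩ | h
          · exact ⟨l + 1, hl⟩
          · exact ⟨0, h⟩
      · intro m
        cases m with
        | zero =>
          refine ⟨Nat.pair 1 k, ?_⟩
          simp only [Nat.unpair_pair, one_ne_zero, if_false]
          exact en_symm n (hgg1 x k hk)
        | succ m =>
          refine ⟨Nat.pair 0 m, ?_⟩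
          simp only [Nat.unpair_pair, if_true]
          exact en_refl n _
    · intro x hx
      have hx' : ∀ k, x ∈ A k := fun k => by
        by_contra h
        exact hx (Set.mem_iUnion.2 ⟨k, h⟩)
      constructor
      · intro m
        by_cases hm : m.unpair.1 = 0
        · refine ⟨m.unpair.2, ?_⟩
          simp only [hm, if_true]
          exact en_refl n _
        · simp only [hm, if_false]
          exact hgg2 x _ (hx' _)
      · intro m
        refine ⟨Nat.pair 0 m, ?_⟩
        simp only [Nat.unpair_pair, if_true]
        exact en_refl n _

/-! ### The main argument -/

section main
variable {ι : Type} {ar : ι → ℕ}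

theorem md_clopen [Countable ι] (U : Set (Md ι ar)) (hU : IsOpen U) :
    ∃ C : ℕ → Set (Md ι ar), (∀ k, IsClopen (C k)) ∧ U = ⋃ k, C k := by
  haveI : CompactSpace (Md ι ar) :=
    inferInstanceAs (CompactSpace (∀ i : ι, (Fin (ar i) → ℕ) → Bool))
  haveI : T2Space (Md ι ar) :=
    inferInstanceAs (T2Space (∀ i : ι, (Fin (ar i) → ℕ) → Bool))
  haveI : TotallyDisconnectedSpace (Md ι ar) :=
    inferInstanceAs (TotallyDisconnectedSpace (∀ i : ι, (Fin (ar i) → ℕ) → Bool))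
  haveI : SecondCountableTopology (Md ι ar) :=
    inferInstanceAs (SecondCountableTopology (∀ i : ι, (Fin (ar i) → ℕ) → Bool))
  obtain ⟨S, hS, rfl⟩ := (isTopologicalBasis_isClopen (X := Md ι ar)).open_eq_sUnion hU
  obtain ⟨T, hT, hTS, hTU⟩ := TopologicalSpace.isOpen_sUnion_countable S fun s hs => (hS hs).isOpen
  have hc : (insert ∅ T).Countable := hT.insert _
  obtain ⟨f, hf⟩ := hc.exists_eq_range ⟨∅, Set.mem_insert _ _⟩
  refine ⟨f, fun k => ?_, ?_⟩
  · have : f k ∈ insert ∅ T := hf ▸ Set.mem_range_self k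
    rcases this with h | h
    · rw [h]; exact isClopen_empty
    · exact hS (hTS h)
  · rw [← hTU, ← Set.sUnion_range, ← hf]
    simp

theorem pair_sep {n : ℕ} {A B : Md ι ar} (hAB : ¬ Iso A B)
    (h : Learnable (eqNatPlus n) ({A, B} : Set (Md ι ar))) :
    ∃ U ∈ SigmaLevel (Md ι ar) (2 * n), (∀ S S', Iso S S' → (S ∈ U ↔ S' ∈ U)) ∧
      ¬ (A ∈ U ↔ B ∈ U) := by
  obtain ⟨Γ, hΓ, hΓE⟩ := h
  let a : LearnDom ({A, B} : Set (Md ι ar)) := ⟨A, A, by simp, iso_refl A⟩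
  let b : LearnDom ({A, B} : Set (Md ι ar)) := ⟨B, B, by simp, iso_refl B⟩
  obtain ⟨W, hW, hWinv, hWs⟩ := en_sep_aux n (Γ a) (Γ b) fun h => hAB ((hΓE a b).2 h)
  obtain ⟨V, hV, hVW⟩ := sl_extend _ (sl_preimage hΓ hW)
  have hmem : ∀ S : LearnDom ({A, B} : Set (Md ι ar)), S.1 ∈ V ↔ Γ S ∈ W := fun S => by
    have : S ∈ Γ ⁻¹' W ↔ S ∈ Subtype.val ⁻¹' V := by rw [hVW]
    exact this.symm
  have hc : ∀ c : LearnDom ({A, B} : Set (Md ι ar)), c.1 ∈ ({A, B} : Set (Md ι ar)) →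
      (c.1 ∈ vt V Set.univ ↔ Γ c ∈ W) := by
    intro c hc
    have hS : ∀ S, Iso S c.1 → (S ∈ V ↔ Γ c ∈ W) := by
      intro S hS
      let s : LearnDom ({A, B} : Set (Md ι ar)) := ⟨S, c.1, hc, hS⟩
      have h1 := hmem s
      have h2 := (hΓE s c).1 hS
      exact h1.trans ⟨hWinv _ _ h2, hWinv _ _ (en_symm n h2)⟩
    constructor
    · intro h
      by_contra h'
      exact vt_not_mem (fun S hs => fun hSV => h' ((hS S hs).1 hSV)) h
    · intro h
      exact vt_mem fun S hs => (hS S hs).2 h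
  refine ⟨vt V Set.univ, vt_sl hV isOpen_univ, fun S S' h => vt_inv h, ?_⟩
  rw [hc a (by simp [a]), hc b (by simp [b])]
  exact hWs

end main

/-- for every `n ≥ 1` (via the shift `eqNatPlus n = =_ℕ^{(n+1)+}`),
`=_ℕ^{(n+1)+}` is compact for learning: a countable family of pairwise nonisomorphic
structures is learnable iff each of its two-element subfamilies is. -/
theorem stmt_15 {ι : Type} [Countable ι] (ar : ι → ℕ) (har : ∃ i, 2 ≤ ar i) (n : ℕ)
    (K : Set (Md ι ar)) (hK : GoodFamily K) :
    Learnable (eqNatPlus n) K ↔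
      ∀ A ∈ K, ∀ B ∈ K, A ≠ B → Learnable (eqNatPlus n) ({A, B} : Set (Md ι ar)) := by
  constructor
  · rintro ⟨Γ, hΓ, hE⟩ A hA B hB -
    have hsub : LearnDom ({A, B} : Set (Md ι ar)) ⊆ LearnDom K := by
      rintro S ⟨C, hC, hSC⟩
      refine ⟨C, ?_, hSC⟩
      rcases hC with rfl | rfl
      · exact hA
      · exact hB
    exact ⟨fun S => Γ (Set.inclusion hsub S), hΓ.comp (continuous_inclusion hsub),
      fun S S' => hE (Set.inclusion hsub S) (Set.inclusion hsub S')⟩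
  · intro h
    rcases K.eq_empty_or_nonempty with rfl | hne
    · haveI : IsEmpty (LearnDom (∅ : Set (Md ι ar))) :=
        ⟨fun S => by obtain ⟨C, hC, -⟩ := S.2; exact hC⟩
      exact ⟨fun S => isEmptyElim S, continuous_iff_continuousAt.2 (fun S => isEmptyElim S), fun S => isEmptyElim S⟩
    · obtain ⟨e, he⟩ := hK.1.exists_eq_range hne
      have heK : ∀ i, e i ∈ K := fun i => he ▸ Set.mem_range_self i
      have hU : ∀ i j, ∃ U ∈ SigmaLevel (Md ι ar) (2 * n),
          (∀ S S', Iso S S' → (S ∈ U ↔ S' ∈ U)) ∧ (e i ≠ e j → ¬ (e i ∈ U ↔ e j ∈ U)) := by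
        intro i j
        by_cases hij : e i = e j
        · exact ⟨∅, (sl_empty_univ _).1, fun _ _ _ => by simp, fun h => (h hij).elim⟩
        · obtain ⟨U, h1, h2, h3⟩ := pair_sep (hK.2 _ (heK i) _ (heK j) hij)
            (h _ (heK i) _ (heK j) hij)
          exact ⟨U, h1, h2, fun _ => h3⟩
      choose U hUs hUinv hUsep using hU
      choose g hg hgF hgI using fun i j => code_exists md_clopen n (U i j) (hUs i j)
      have hgU : ∀ i j S S', eqNatPlus n (g i j S) (g i j S') ↔ (S ∈ U i j ↔ S' ∈ U i j) := by
        intro i j S S'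
        by_cases h1 : S ∈ U i j <;> by_cases h2 : S' ∈ U i j
        · simp only [h1, h2, iff_true]
          exact en_trans n (hgF i j S h1) (en_symm n (hgF i j S' h2))
        · simp only [h1, h2, iff_false, not_true]
          intro h3
          exact codeFI_ne n (en_trans n (en_symm n (hgF i j S h1)) (en_trans n h3 (hgI i j S' h2)))
        · simp only [h1, h2, iff_true]
          refine iff_of_false (fun h3 => ?_) (fun h => h)
          exact codeFI_ne n (en_trans n (en_symm n (hgF i j S' h2))
            (en_trans n (en_symm n h3) (hgI i j S h1)))
        · simp only [h1, h2, iff_true]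
          exact en_trans n (hgI i j S h1) (en_symm n (hgI i j S' h2))
      refine ⟨fun S => mergeT n (fun x => g x.unpair.1 x.unpair.2 S.1),
        cont_merge n fun k => (hg _ _).comp continuous_subtype_val, ?_⟩
      intro S S'
      rw [en_merge]
      simp only [hgU]
      constructor
      · exact fun hS i => hUinv _ _ _ _ hS
      · intro hS
        obtain ⟨A, hA, hSA⟩ := S.2
        obtain ⟨B, hB, hSB⟩ := S'.2
        rw [he] at hA hB
        obtain ⟨i, rfl⟩ := hA
        obtain ⟨j, rfl⟩ := hB
        by_cases hij : e i = e j
        · rw [← hij] at hSB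
          exact iso_trans hSA (iso_symm hSB)
        · exfalso
          apply hUsep i j hij
          have := hS (Nat.pair i j)
          simp only [Nat.unpair_pair] at this
          rw [← hUinv i j _ _ hSA, ← hUinv i j _ _ hSB]
          exact this
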